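/- The RTT relation implies the following commutation relations among the block entries of the monodromy matrix, valid for all 1 ≤ i,j,k ≤ n−1: (i) A(x) B_i(y) = (1/(y ⊖ x)) [B_i(y) A(x) − B_i(x) A(y)]; (ii) D_{ij}(x) B_k(y) = ∑_{s,l=1}^{n−1} (1/(x ⊖ y)) B_s(y) D_{il}(x) R^(n−1)_{ls,jk}(x,y) + (1/(y ⊖ x)) B_j(x) D_{ik}(y); (iii) B_i(x) B_j(y) = ∑_{r,s=1}^{n−1} B_r(y) B_s(x) R^(n−1)_{sr,ij}(x,y), where in R^(n−1) the indices 1,…,n−1 are relabelled 0,…,n−2. -/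

import Mathlib

noncomputable section
open scoped BigOperators

variable {F : Type*}

/-- `x ⊖ y := (x - y)/(1 + β·y)`. -/
def om [Field F] (β x y : F) : F := (x - y) / (1 + β * y)

/-- `⊖ t := -t/(1 + β·t)`. -/
def negOm [Field F] (β t : F) : F := (-t) / (1 + β * t)

/-- The R-matrix `R^{(n)}(x,y)` on `V ⊗ V`, `V = F^n`, with entries
`R_{ij,kl} = (1 + [k<l]·β(x⊖y)) δ_{il} δ_{jk} + [k>l]·(x⊖y) δ_{ik} δ_{jl}`;
the row index is the pair `(i,j)`, the column index is the pair `(k,l)`. -/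
def Rmat [Field F] (n : ℕ) (β x y : F) :
    Matrix (Fin n × Fin n) (Fin n × Fin n) F := Matrix.of fun p q =>
  (if p.1 = q.2 ∧ p.2 = q.1 then (if q.1 < q.2 then 1 + β * om β x y else 1) else 0) +
  (if p.1 = q.1 ∧ p.2 = q.2 ∧ q.2 < q.1 then om β x y else 0)

/-- `R_{a i}(u, τ)` : the R-matrix acting on the auxiliary space (first factor)
and the `i`-th site of `H = (F^n)^{⊗N}`, identity elsewhere. -/
def Rsite [Field F] (n N : ℕ) (β u τ : F) (i : Fin N) :
    Matrix (Fin n × (Fin N → Fin n)) (Fin n × (Fin N → Fin n)) F := Matrix.of fun p q =>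
  Rmat n β u τ (p.1, p.2 i) (q.1, q.2 i) *
    (if ∀ j, j ≠ i → p.2 j = q.2 j then 1 else 0)

/-- The monodromy matrix `T_a(u) = R_{aN}(u,t_N) ⋯ R_{a1}(u,t_1)` on `V_a ⊗ H`. -/
def Tmono [Field F] (n N : ℕ) (β u : F) (t : Fin N → F) :
    Matrix (Fin n × (Fin N → Fin n)) (Fin n × (Fin N → Fin n)) F :=
  ((List.ofFn fun i : Fin N => Rsite n N β u (t i) i).reverse).prod

/-- The block `T_a(u)_{r c}` (with respect to the auxiliary space) as an operator on `H`. -/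
def blockOp [Field F] (n N : ℕ) (β u : F) (t : Fin N → F) (r c : Fin n) :
    Matrix (Fin N → Fin n) (Fin N → Fin n) F :=
  Matrix.of fun s s' => Tmono n N β u t (r, s) (c, s')

/-- The natural basis vector `|n_1,…,n_N⟩` of `H` (also used as a dual basis covector). -/
def ket [Field F] (n N : ℕ) (g : Fin N → Fin n) : (Fin N → Fin n) → F :=
  fun s => if s = g then 1 else 0

/-!
The matrix `R` acts on functions of two indices, and in this form the Yang–Baxter equation
`R₁₂ R₁₃ R₂₃ = R₂₃ R₁₃ R₁₂` is a polynomial identity for each relative order of three indices,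
resting on the cocycle identity `x ⊖ z = (x ⊖ y) + (y ⊖ z) + β (x ⊖ y) (y ⊖ z)`. It is the
relation `R₁₂ X₁ Y₂ = Y₂ X₁ R₁₂` for the one-site monodromy matrices. That relation is preserved
by algebra homomorphisms, and by products as soon as the entries of distinct factors commute, so
it passes to any number of sites. The commutation relations are then read off from the entries of
the RTT relation: a column `(j, k)` of `R⁽ⁿ⁾` with `j, k ≥ 1` is a column of `R⁽ⁿ⁻¹⁾`, while the
rows `(0, 0)`, `(i, 0)` and the column `(i, 0)` have at most two nonzero entries.
-/

open Matrix
open scoped Kronecker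

section Kronecker

lemma mul_kronecker_mul_of_commute {A l m n l' m' n' : Type*} [NonUnitalSemiring A] [Fintype m]
    [Fintype m'] {X : Matrix l m A} {X' : Matrix m n A} {Y : Matrix l' m' A} {Y' : Matrix m' n' A}
    (h : ∀ a b c d, Commute (X' a b) (Y c d)) :
    (X * X') ⊗ₖ (Y * Y') = (X ⊗ₖ Y) * (X' ⊗ₖ Y') := by
  ext ⟨a, b⟩ ⟨c, d⟩
  simp only [kronecker_apply, mul_apply, Finset.sum_mul_sum, Fintype.sum_prod_type]
  exact Fintype.sum_congr _ _ fun p => Fintype.sum_congr _ _ fun q =>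
    (h p c b q).mul_mul_mul_comm _ _

lemma commute_list_prod_apply {A κ : Type*} [Semiring A] [Fintype κ] [DecidableEq κ] {z : A}
    {l : List (Matrix κ κ A)} (h : ∀ M ∈ l, ∀ a b, Commute z (M a b)) (a b : κ) :
    Commute z (l.prod a b) := by
  have entries_mem : ∀ M ∈ l, M ∈ (Subsemiring.centralizer {z}).matrix := fun M hM a b =>
    Subsemiring.mem_centralizer_iff.2 fun _ hz => hz ▸ h M hM a b
  exact Subsemiring.mem_centralizer_iff.1 (list_prod_mem entries_mem a b) z rfl

end Kronecker

section RTTRelation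

variable {S A B κ : Type*} [CommSemiring S] [Semiring A] [Algebra S A] [Semiring B] [Algebra S B]
  [Fintype κ] {R : Matrix (κ × κ) (κ × κ) S}

/-- The relation `R₁₂ X₁ Y₂ = Y₂ X₁ R₁₂` between matrices `X`, `Y` with entries in a
noncommutative algebra. Here `X₁ Y₂` is `X ⊗ₖ Y`, and `Y₂ X₁` is `Y ⊗ₖ X` with the two tensor
factors interchanged. -/
def RTTRelation (R : Matrix (κ × κ) (κ × κ) S) (X Y : Matrix κ κ A) : Prop :=
  R.map (algebraMap S A) * (X ⊗ₖ Y) =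
    (Y ⊗ₖ X).submatrix (Equiv.prodComm κ κ) (Equiv.prodComm κ κ) * R.map (algebraMap S A)

lemma rttRelation_iff_sum_smul {X Y : Matrix κ κ A} :
    RTTRelation R X Y ↔ ∀ a b c d,
      ∑ p, R (a, b) p • (X p.1 c * Y p.2 d) = ∑ p, R p (c, d) • (Y b p.2 * X a p.1) := by
  simp only [RTTRelation, ← Matrix.ext_iff, Prod.forall, mul_apply, map_apply,
    submatrix_apply, Equiv.prodComm_apply, ← Algebra.smul_def, ← Algebra.commutes]
  exact ⟨fun h a b c d => h a b c d, fun h a b c d => h a b c d⟩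

namespace RTTRelation

lemma map {X Y : Matrix κ κ A} (h : RTTRelation R X Y) (f : A →ₐ[S] B) :
    RTTRelation R (X.map f) (Y.map f) := by
  rw [rttRelation_iff_sum_smul] at h ⊢
  intro a b c d
  simpa using congrArg f (h a b c d)

lemma one [DecidableEq κ] : RTTRelation R (1 : Matrix κ κ A) 1 := by
  rw [RTTRelation, one_kronecker_one, submatrix_one_equiv, mul_one, one_mul]

lemma mul {X X' Y Y' : Matrix κ κ A} (h : RTTRelation R X Y) (h' : RTTRelation R X' Y')
    (hX'Y : ∀ a b c d, Commute (X' a b) (Y c d)) (hXY' : ∀ a b c d, Commute (X a b) (Y' c d)) :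
    RTTRelation R (X * X') (Y * Y') := by
  rw [RTTRelation] at h h' ⊢
  rw [mul_kronecker_mul_of_commute hX'Y,
    mul_kronecker_mul_of_commute fun a b c d => (hXY' c d a b).symm,
    ← submatrix_mul_equiv _ _ _ (Equiv.prodComm κ κ) _, ← mul_assoc, h, mul_assoc, h', mul_assoc]

lemma list_prod_map [DecidableEq κ] {ι : Type*} {X Y : ι → Matrix κ κ A}
    (h : ∀ i, RTTRelation R (X i) (Y i))
    (hcomm : ∀ i j, i ≠ j → ∀ a b c d, Commute (X i a b) (Y j c d))
    {l : List ι} (hl : l.Nodup) : RTTRelation R (l.map X).prod (l.map Y).prod := by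
  induction l with
  | nil => exact one
  | cons i l ih =>
    obtain ⟨hil, hl⟩ := List.nodup_cons.1 hl
    have ne_of_mem {j : ι} (hj : j ∈ l) : i ≠ j := fun hij => hil (hij ▸ hj)
    simp only [List.map_cons, List.prod_cons]
    refine (h i).mul (ih hl) (fun a b c d => (commute_list_prod_apply ?_ a b).symm)
      fun a b => commute_list_prod_apply ?_
    · simpa using fun j hj a b => (hcomm j i (ne_of_mem hj).symm a b c d).symm
    · simpa using fun j hj => hcomm i j (ne_of_mem hj) a b

end RTTRelation

end RTTRelation

section Site

variable {S ι κ : Type*} [CommSemiring S] [Fintype ι] [DecidableEq ι] [Fintype κ] [DecidableEq κ]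

/-- The embedding `M ↦ 1 ⊗ ⋯ ⊗ M ⊗ ⋯ ⊗ 1` of the operators on one factor of a tensor power into
the operators on the whole, with `M` at site `i`; the tensor power has basis `ι → κ`. -/
def siteHom (i : ι) : Matrix κ κ S →ₐ[S] Matrix (ι → κ) (ι → κ) S :=
  ((reindexAlgEquiv S S (Equiv.funSplitAt i κ).symm).toAlgHom.comp
    (compAlgEquiv κ ({j // j ≠ i} → κ) S S).toAlgHom).comp (Algebra.ofId S _).mapMatrix

lemma siteHom_apply (i : ι) (M : Matrix κ κ S) (p q : ι → κ) :
    siteHom i M p q = M (p i) (q i) * if ∀ j, j ≠ i → p j = q j then 1 else 0 := by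
  simp [siteHom, Equiv.funSplitAt, Algebra.ofId_apply, Matrix.algebraMap_matrix_apply, funext_iff]

lemma siteHom_mul_apply (i : ι) (M : Matrix κ κ S) (K : Matrix (ι → κ) (ι → κ) S) (p q : ι → κ) :
    (siteHom i M * K) p q = ∑ e, M (p i) e * K (Function.update p i e) q := by
  rw [mul_apply]
  refine (Fintype.sum_of_injective (Function.update p i) (Function.update_injective p i) _ _
    (fun r hr => ?_) fun e => ?_).symm
  · have differs : ¬ ∀ j, j ≠ i → p j = r j := fun h =>
      hr ⟨r i, (Function.eq_update_iff.2 ⟨rfl, fun j hj => (h j hj).symm⟩).symm⟩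
    rw [siteHom_apply, if_neg differs, mul_zero, zero_mul]
  · simp +contextual [siteHom_apply]

lemma commute_siteHom {i j : ι} (hij : i ≠ j) (M M' : Matrix κ κ S) :
    Commute (siteHom i M) (siteHom j M') := by
  ext p q
  rw [← mul_one (siteHom i M * _), ← mul_one (siteHom j M' * _), mul_assoc, mul_assoc]
  simp only [siteHom_mul_apply, Function.update_of_ne hij, Function.update_of_ne hij.symm,
    Finset.mul_sum]
  rw [Finset.sum_comm]
  exact Fintype.sum_congr _ _ fun e => Fintype.sum_congr _ _ fun e' => by
    rw [Function.update_comm hij, mul_left_comm]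

end Site

section Action

variable {S κ E : Type*} [CommRing S] [LinearOrder κ] [AddCommGroup E] [Module S E]

/-- The action `g ↦ ∑ₖₗ R_{ij,kl} g(k, l)` of the R-matrix with `x ⊖ y = u` on functions of two
indices, in closed form and for an arbitrary linearly ordered index set. -/
def rmatAct (β u : S) (g : κ → κ → E) (i j : κ) : E :=
  if j < i then (1 + β * u) • g j i + u • g i j else g j i

lemma rmatAct_yangBaxter {β u v w : S} (hv : v = u + w + β * u * w) (g : κ → κ → κ → E)
    (a b c : κ) :
    rmatAct β u (fun a b => rmatAct β v (fun a c => rmatAct β w (g a) b c) a c) a b =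
      rmatAct β w (fun b c => rmatAct β v (fun a c => rmatAct β u (g · · c) a b) a c) b c := by
  subst hv
  simp only [rmatAct]
  rcases lt_trichotomy a b with hab | hab | hab <;>
    rcases lt_trichotomy b c with hbc | hbc | hbc <;>
    rcases lt_trichotomy a c with hac | hac | hac <;>
    first
    | order
    | (subst_vars; simp only [*, lt_irrefl, not_lt_of_gt, if_true, if_false]; try module)

end Action

section RMatrix

variable [Field F]

lemma om_eq_add_om (x : F) {β y z : F} (hy : 1 + β * y ≠ 0) (hz : 1 + β * z ≠ 0) :
    om β x z = om β x y + om β y z + β * om β x y * om β y z := by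
  have hxy : om β x y * (1 + β * y) = x - y := div_mul_cancel₀ _ hy
  have hyz : om β y z * (1 + β * z) = y - z := div_mul_cancel₀ _ hz
  have hxz : om β x z * (1 + β * z) = x - z := div_mul_cancel₀ _ hz
  apply mul_right_cancel₀ hz
  linear_combination hxz - hyz - hxy - β * om β x y * hyz

lemma inv_om_mul_one_add (β x : F) {y : F} (hy : 1 + β * y ≠ 0) :
    (om β x y)⁻¹ * (1 + β * om β x y) = -(om β y x)⁻¹ := by
  have one_add_om : 1 + β * om β x y = (1 + β * x) / (1 + β * y) := by
    rw [om]
    field_simp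
    ring
  rw [one_add_om, om, om, inv_div, inv_div, div_mul_div_cancel₀' hy, ← div_neg, neg_sub]

variable {E : Type*} [AddCommGroup E] [Module F E] {n : ℕ} (β x y : F)

lemma sum_Rmat_row_smul (g : Fin n → Fin n → E) (i j : Fin n) :
    ∑ q, Rmat n β x y (i, j) q • g q.1 q.2 = rmatAct β (om β x y) g i j := by
  simp only [Rmat, of_apply, add_smul, Fintype.sum_prod_type, Finset.sum_add_distrib, ite_smul,
    zero_smul, ite_and, Finset.sum_ite_eq, Finset.sum_ite_irrel, Finset.sum_const_zero,
    Finset.mem_univ, if_true, rmatAct]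
  split_ifs <;> simp

lemma sum_Rmat_col_smul_of_lt (g : Fin n → Fin n → E) {k l : Fin n} (h : l < k) :
    ∑ p, Rmat n β x y p (k, l) • g p.1 p.2 = g l k + om β x y • g k l := by
  simp [Rmat, add_smul, Fintype.sum_prod_type, Finset.sum_add_distrib, ite_and, h, h.not_gt]

lemma sum_Rmat_col_succ_smul (g : Fin (n + 1) → Fin (n + 1) → E) (j k : Fin n) :
    ∑ p, Rmat (n + 1) β x y p (j.succ, k.succ) • g p.1 p.2 =
      ∑ s : Fin n, ∑ l : Fin n, Rmat n β x y (l, s) (j, k) • g l.succ s.succ := by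
  rw [Fintype.sum_prod_type, Finset.sum_comm]
  simp [Rmat, Fin.sum_univ_succ, (Fin.succ_ne_zero _).symm]

end RMatrix

section Monodromy

variable [Field F] {n N : ℕ} {β x y z : F} {t : Fin N → F}

lemma Rmat_yangBaxter (hy : 1 + β * y ≠ 0) (hz : 1 + β * z ≠ 0) (a b c a' b' c' : Fin n) :
    ∑ i, ∑ j, ∑ k, Rmat n β x y (a, b) (i, j) * Rmat n β x z (i, c) (a', k) *
        Rmat n β y z (j, k) (b', c') =
      ∑ j, ∑ k, ∑ i, Rmat n β y z (b, c) (j, k) * Rmat n β x z (a, k) (i, c') *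
        Rmat n β x y (i, j) (a', b') := by
  have on_indicator := rmatAct_yangBaxter (om_eq_add_om x hy hz)
    (fun i j k => if i = a' ∧ j = b' ∧ k = c' then (1 : F) else 0) a b c
  simp only [← sum_Rmat_row_smul] at on_indicator
  simpa [ite_and, Fintype.sum_prod_type, Finset.mul_sum, mul_assoc] using on_indicator

/-- The blocks of the R-matrix with respect to its first tensor factor: the monodromy matrix of a
single site, as a matrix of operators on that site. -/
def rmatBlocks (n : ℕ) (β x y : F) : Matrix (Fin n) (Fin n) (Matrix (Fin n) (Fin n) F) :=
  (compRingEquiv (Fin n) (Fin n) F).symm (Rmat n β x y)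

lemma rttRelation_rmatBlocks (hy : 1 + β * y ≠ 0) (hz : 1 + β * z ≠ 0) :
    RTTRelation (Rmat n β x y) (rmatBlocks n β x z) (rmatBlocks n β y z) := by
  rw [rttRelation_iff_sum_smul]
  intro a b a' b'
  ext c c'
  calc
    _ = ∑ i, ∑ j, ∑ k, Rmat n β x y (a, b) (i, j) * Rmat n β x z (i, c) (a', k) *
        Rmat n β y z (j, k) (b', c') := by
      simp [Matrix.sum_apply, mul_apply, rmatBlocks, Fintype.sum_prod_type, Finset.mul_sum,
        mul_assoc]
    _ = ∑ j, ∑ k, ∑ i, Rmat n β y z (b, c) (j, k) * Rmat n β x z (a, k) (i, c') *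
        Rmat n β x y (i, j) (a', b') := Rmat_yangBaxter hy hz a b c a' b' c'
    _ = ∑ j, ∑ i, ∑ k, Rmat n β y z (b, c) (j, k) * Rmat n β x z (a, k) (i, c') *
        Rmat n β x y (i, j) (a', b') := Fintype.sum_congr _ _ fun _ => Finset.sum_comm
    _ = _ := by
      rw [Finset.sum_comm]
      simp [Matrix.sum_apply, mul_apply, rmatBlocks, Fintype.sum_prod_type, Finset.mul_sum,
        mul_comm]

lemma of_blockOp_eq_prod (u : F) (t : Fin N → F) :
    of (blockOp n N β u t) =
      ((List.finRange N).reverse.map fun i => (rmatBlocks n β u (t i)).map (siteHom i)).prod := by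
  have rsite_blocks (i : Fin N) : (rmatBlocks n β u (t i)).map (siteHom i) =
      (compRingEquiv (Fin n) (Fin N → Fin n) F).symm (Rsite n N β u (t i) i) := by
    ext a b p q
    simp [siteHom_apply, rmatBlocks, Rsite]
  change (compRingEquiv (Fin n) (Fin N → Fin n) F).symm (Tmono n N β u t) = _
  simp only [Tmono, map_list_prod, rsite_blocks, List.ofFn_eq_map, List.map_reverse, List.map_map,
    Function.comp_def]

theorem rttRelation_blockOp (hy : 1 + β * y ≠ 0) (ht : ∀ i, 1 + β * t i ≠ 0) :
    RTTRelation (Rmat n β x y) (of (blockOp n N β x t)) (of (blockOp n N β y t)) := by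
  rw [of_blockOp_eq_prod, of_blockOp_eq_prod]
  exact RTTRelation.list_prod_map (fun i => (rttRelation_rmatBlocks hy (ht i)).map (siteHom i))
    (fun i j hij _ _ _ _ => commute_siteHom hij _ _)
    (List.nodup_reverse.2 (List.nodup_finRange N))

end Monodromy

section Relations

variable [Field F] {A : Type*} [Ring A] [Algebra F A] {n : ℕ} {β x y : F}
  {X Y : Matrix (Fin (n + 1)) (Fin (n + 1)) A}

namespace RTTRelation

lemma zero_zero_mul_zero_succ (h : RTTRelation (Rmat (n + 1) β y x) Y X) (hyx : om β y x ≠ 0)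
    (i : Fin n) :
    X 0 0 * Y 0 i.succ = (om β y x)⁻¹ • (Y 0 i.succ * X 0 0 - X 0 i.succ * Y 0 0) := by
  have entry := rttRelation_iff_sum_smul.1 h 0 0 i.succ 0
  rw [sum_Rmat_row_smul β y x fun p q => Y p i.succ * X q 0,
    sum_Rmat_col_smul_of_lt β y x (fun p q => X 0 q * Y 0 p) i.succ_pos] at entry
  rw [eq_inv_smul_iff₀ hyx, eq_sub_iff_add_eq', ← entry, rmatAct, if_neg (lt_irrefl _)]

lemma zero_succ_mul_zero_succ (h : RTTRelation (Rmat (n + 1) β x y) X Y) (i j : Fin n) :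
    X 0 i.succ * Y 0 j.succ =
      ∑ r, ∑ s, Rmat n β x y (s, r) (i, j) • (Y 0 r.succ * X 0 s.succ) := by
  have entry := rttRelation_iff_sum_smul.1 h 0 0 i.succ j.succ
  rwa [sum_Rmat_row_smul β x y fun p q => X p i.succ * Y q j.succ, rmatAct,
    if_neg (lt_irrefl _), sum_Rmat_col_succ_smul β x y fun p q => Y 0 q * X 0 p] at entry

lemma succ_succ_mul_zero_succ (h : RTTRelation (Rmat (n + 1) β x y) X Y) (hy : 1 + β * y ≠ 0)
    (hxy : om β x y ≠ 0) (i j k : Fin n) :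
    X i.succ j.succ * Y 0 k.succ =
      ∑ s, ∑ l, ((om β x y)⁻¹ * Rmat n β x y (l, s) (j, k)) • (Y 0 s.succ * X i.succ l.succ) +
        (om β y x)⁻¹ • (X 0 j.succ * Y i.succ k.succ) := by
  have entry := rttRelation_iff_sum_smul.1 h i.succ 0 j.succ k.succ
  rw [sum_Rmat_row_smul β x y fun p q => X p j.succ * Y q k.succ, rmatAct, if_pos i.succ_pos,
    sum_Rmat_col_succ_smul β x y fun p q => Y 0 q * X i.succ p] at entry
  simp only [mul_smul, ← Finset.smul_sum]
  rw [← entry, smul_add, smul_smul, inv_om_mul_one_add β x hy, inv_smul_smul₀ hxy, neg_smul,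
    neg_add_cancel_comm]

end RTTRelation

end Relations

lemma one_add_mul_ne_zero_of_algebraicIndependent {ι R B : Type*} [CommRing R] [Nontrivial R]
    [CommRing B] [Algebra R B] {v : ι → B} (hv : AlgebraicIndependent R v) (i j : ι) :
    1 + v i * v j ≠ 0 := by
  intro h
  have poly_eq_zero : (1 + MvPolynomial.X i * MvPolynomial.X j : MvPolynomial ι R) = 0 :=
    hv.eq_zero_of_aeval_eq_zero _ (by simpa using h)
  simpa using congrArg (MvPolynomial.eval 0) poly_eq_zero

theorem block_commutation_relations_general [Field F] (n N : ℕ) {β x y : F} {t : Fin N → F}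
    (hx : 1 + β * x ≠ 0) (hy : 1 + β * y ≠ 0) (ht : ∀ i, 1 + β * t i ≠ 0) (hxy : x ≠ y) :
    (∀ i : Fin n,
        blockOp (n + 1) N β x t 0 0 * blockOp (n + 1) N β y t 0 i.succ =
          (om β y x)⁻¹ •
            (blockOp (n + 1) N β y t 0 i.succ * blockOp (n + 1) N β x t 0 0 -
              blockOp (n + 1) N β x t 0 i.succ * blockOp (n + 1) N β y t 0 0)) ∧
    (∀ i j k : Fin n,
        blockOp (n + 1) N β x t i.succ j.succ * blockOp (n + 1) N β y t 0 k.succ =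
          (∑ s : Fin n, ∑ l : Fin n,
              ((om β x y)⁻¹ * Rmat n β x y (l, s) (j, k)) •
                (blockOp (n + 1) N β y t 0 s.succ * blockOp (n + 1) N β x t i.succ l.succ)) +
            (om β y x)⁻¹ •
              (blockOp (n + 1) N β x t 0 j.succ * blockOp (n + 1) N β y t i.succ k.succ)) ∧
    (∀ i j : Fin n,
        blockOp (n + 1) N β x t 0 i.succ * blockOp (n + 1) N β y t 0 j.succ =
          ∑ r : Fin n, ∑ s : Fin n,
            Rmat n β x y (s, r) (i, j) •
              (blockOp (n + 1) N β y t 0 r.succ * blockOp (n + 1) N β x t 0 s.succ)) := by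
  have hu : om β x y ≠ 0 := div_ne_zero (sub_ne_zero.2 hxy) hy
  have hu' : om β y x ≠ 0 := div_ne_zero (sub_ne_zero.2 hxy.symm) hx
  exact ⟨(rttRelation_blockOp hx ht).zero_zero_mul_zero_succ hu',
    (rttRelation_blockOp hy ht).succ_succ_mul_zero_succ hy hu,
    (rttRelation_blockOp hy ht).zero_succ_mul_zero_succ⟩

/-- **Commutation relations** among the blocks `A(u) = T_a(u)_{00}`,
`B_i(u) = T_a(u)_{0i}`, `D_{ij}(u) = T_a(u)_{ij}` (`1 ≤ i,j ≤ n-1`) of the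
monodromy matrix, for `n = m+2`.  The indices `1,…,n-1` of `R^{(n-1)}` are
relabelled `0,…,n-2`. -/
theorem block_commutation_relations [Field F] [CharZero F] (m N : ℕ) (β x y : F)
    (t : Fin N → F)
    (hind : AlgebraicIndependent ℚ (Sum.elim ![β, x, y] t)) :
    (∀ i : Fin (m + 1),
        blockOp (m + 2) N β x t 0 0 * blockOp (m + 2) N β y t 0 i.succ =
          (om β y x)⁻¹ •
            (blockOp (m + 2) N β y t 0 i.succ * blockOp (m + 2) N β x t 0 0 -
              blockOp (m + 2) N β x t 0 i.succ * blockOp (m + 2) N β y t 0 0)) ∧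
    (∀ i j k : Fin (m + 1),
        blockOp (m + 2) N β x t i.succ j.succ * blockOp (m + 2) N β y t 0 k.succ =
          (∑ s : Fin (m + 1), ∑ l : Fin (m + 1),
              ((om β x y)⁻¹ * Rmat (m + 1) β x y (l, s) (j, k)) •
                (blockOp (m + 2) N β y t 0 s.succ * blockOp (m + 2) N β x t i.succ l.succ)) +
            (om β y x)⁻¹ •
              (blockOp (m + 2) N β x t 0 j.succ * blockOp (m + 2) N β y t i.succ k.succ)) ∧
    (∀ i j : Fin (m + 1),
        blockOp (m + 2) N β x t 0 i.succ * blockOp (m + 2) N β y t 0 j.succ =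
          ∑ r : Fin (m + 1), ∑ s : Fin (m + 1),
            Rmat (m + 1) β x y (s, r) (i, j) •
              (blockOp (m + 2) N β y t 0 r.succ * blockOp (m + 2) N β x t 0 s.succ)) :=
  have hne := one_add_mul_ne_zero_of_algebraicIndependent hind (Sum.inl 0)
  block_commutation_relations_general (m + 1) N (hne (Sum.inl 1)) (hne (Sum.inl 2))
    (fun i => hne (Sum.inr i)) (hind.injective.ne (a₁ := Sum.inl 1) (a₂ := Sum.inl 2) (by simp))
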